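/- arXiv:1208.5225 — 2 statements merged into one kernel-verified Lean document; each statement's English description precedes it below -/
import Mathlib

section
/- Suppose the GI/G/1-type Markov chain is irreducible, aperiodic and positive recurrent, the phase matrix A is stochastic, and φ_{A+} > 1. Then χ(z) < 1 for every real z with 1 < z < min(φ_{A+}, η), and for each such z there exists a Perron–Frobenius right eigenvector Y(z) with all entries ≥ 1 satisfying A*(z) Y(z) = χ(z) Y(z). -/
open Filter Topology
open scoped ENNReal NNReal BigOperators

namespace GIG1

/-- The state space of a `GI/G/1`-type Markov chain: level `i : ℕ`, phase `j : Fin m`. -/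
abbrev S (m : ℕ) := ℕ × Fin m

/-- The transition kernel of the `GI/G/1`-type Markov chain with matrix blocks `A, B`. -/
noncomputable def P {m : ℕ} (A B : ℤ → Matrix (Fin m) (Fin m) ℝ) : S m → S m → ℝ
  | (0, j), (k, s) => B (k : ℤ) j s
  | (i + 1, j), (0, s) => B (-(i + 1 : ℤ)) j s
  | (i + 1, j), (k + 1, s) => A ((k : ℤ) - (i : ℤ)) j s

/-- `n`-step transition probabilities. -/
noncomputable def Pn {m : ℕ} (P : S m → S m → ℝ) : ℕ → S m → S m → ℝ
  | 0, x, y => if x = y then 1 else 0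
  | n + 1, x, y => ∑' z : S m, P x z * Pn P n z y

def Stochastic {m : ℕ} (P : S m → S m → ℝ) : Prop :=
  (∀ x y, 0 ≤ P x y) ∧ ∀ x, HasSum (P x) 1

def ChainIrreducible {m : ℕ} (P : S m → S m → ℝ) : Prop :=
  ∀ x y, ∃ n, 1 ≤ n ∧ 0 < Pn P n x y

def ChainAperiodic {m : ℕ} (P : S m → S m → ℝ) : Prop :=
  ∀ x, ∃ N, ∀ n ≥ N, 0 < Pn P n x x

/-- `pd` is a stationary probability distribution of `P`; for an irreducible aperiodic chain
this is equivalent to positive recurrence. -/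
def IsStationary {m : ℕ} (P : S m → S m → ℝ) (pd : S m → ℝ) : Prop :=
  (∀ x, 0 ≤ pd x) ∧ HasSum pd 1 ∧ ∀ y, HasSum (fun x => pd x * P x y) (pd y)

/-- The phase matrix `A = ∑ₖ Aₖ`. -/
noncomputable def matA {m : ℕ} (A : ℤ → Matrix (Fin m) (Fin m) ℝ) : Matrix (Fin m) (Fin m) ℝ :=
  Matrix.of fun r s => ∑' k : ℤ, A k r s

/-- The phase matrix `A = ∑ₖ Aₖ` is stochastic. -/
def PhaseStochastic {m : ℕ} (A : ℤ → Matrix (Fin m) (Fin m) ℝ) : Prop :=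
  ∀ r, HasSum (fun p : ℤ × Fin m => A p.1 r p.2) 1

/-- Irreducibility of a nonnegative matrix. -/
def MatIrreducible {m : ℕ} (M : Matrix (Fin m) (Fin m) ℝ) : Prop :=
  ∀ r s, ∃ n, 1 ≤ n ∧ 0 < (M ^ n) r s

/-- Radius of convergence of a power series with nonnegative coefficients. -/
noncomputable def radius (c : ℕ → ℝ) : ℝ≥0∞ :=
  ⨆ (r : ℝ≥0) (_ : Summable fun k => c k * (r : ℝ) ^ k), (r : ℝ≥0∞)

/-- `φ_{A+}`: the minimum over entries of the radii of convergence of `∑_{k ≥ 1} A_k(r,s) z^k`. -/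
noncomputable def phiA {m : ℕ} (A : ℤ → Matrix (Fin m) (Fin m) ℝ) : ℝ≥0∞ :=
  ⨅ (r : Fin m) (s : Fin m), radius fun k => A ((k : ℤ) + 1) r s

/-- `φ_{B+}`. -/
noncomputable def phiB {m : ℕ} (B : ℤ → Matrix (Fin m) (Fin m) ℝ) : ℝ≥0∞ :=
  ⨅ (r : Fin m) (s : Fin m), radius fun k => B ((k : ℤ) + 1) r s

/-- The matrix sequence `{C_k}_{k ≥ 1}` is light-tailed. -/
def LightMat {m : ℕ} (C : ℤ → Matrix (Fin m) (Fin m) ℝ) : Prop :=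
  ∀ r s, ∃ ε > (0 : ℝ),
    Summable fun k : ℕ => C ((k : ℤ) + 1) r s * Real.exp (ε * ((k : ℝ) + 1))

/-- `A^*(z) = ∑_{k ∈ ℤ} z^k A_k` for complex `z`. -/
noncomputable def AstarC {m : ℕ} (A : ℤ → Matrix (Fin m) (Fin m) ℝ) (z : ℂ) :
    Matrix (Fin m) (Fin m) ℂ :=
  Matrix.of fun r s => ∑' k : ℤ, (A k r s : ℂ) * z ^ k

/-- `A^*(z) = ∑_{k ∈ ℤ} z^k A_k` for real `z`. -/
noncomputable def AstarR {m : ℕ} (A : ℤ → Matrix (Fin m) (Fin m) ℝ) (z : ℝ) :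
    Matrix (Fin m) (Fin m) ℝ :=
  Matrix.of fun r s => ∑' k : ℤ, A k r s * z ^ k

/-- The set `Ω = {z ∈ ℂ : 1 < |z| < φ_{A+}, det(I - A^*(z)) = 0}`. -/
def Omega {m : ℕ} (A : ℤ → Matrix (Fin m) (Fin m) ℝ) : Set ℂ :=
  {z | 1 < ‖z‖ ∧ ENNReal.ofReal ‖z‖ < phiA A ∧ (1 - AstarC A z).det = 0}

/-- `η`: the minimal modulus of an element of `Ω`, or `∞` when `Ω = ∅`. -/
noncomputable def eta {m : ℕ} (A : ℤ → Matrix (Fin m) (Fin m) ℝ) : ℝ≥0∞ :=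
  sInf ((fun z : ℂ => ENNReal.ofReal ‖z‖) '' Omega A)

/-- The largest (Perron–Frobenius) eigenvalue of a nonnegative matrix. -/
noncomputable def chi {m : ℕ} (M : Matrix (Fin m) (Fin m) ℝ) : ℝ :=
  sSup {r : ℝ | ∃ v : Fin m → ℝ, v ≠ 0 ∧ M.mulVec v = r • v}

/-! ### Finite-dimensional lemmas -/

lemma support_pow {m : ℕ} {M M' : Matrix (Fin m) (Fin m) ℝ}
    (h0 : ∀ r s, 0 ≤ M r s) (h0' : ∀ r s, 0 ≤ M' r s)
    (h : ∀ r s, 0 < M r s → 0 < M' r s) (n : ℕ) :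
    ∀ r s, (0 ≤ (M ^ n) r s ∧ 0 ≤ (M' ^ n) r s) ∧ (0 < (M ^ n) r s → 0 < (M' ^ n) r s) := by
  induction n with
  | zero =>
    intro r s
    simp only [pow_zero, Matrix.one_apply]
    split_ifs <;> simp
  | succ n ih =>
    intro r s
    simp only [pow_succ, Matrix.mul_apply]
    refine ⟨⟨Finset.sum_nonneg fun t _ => mul_nonneg (ih r t).1.1 (h0 t s),
      Finset.sum_nonneg fun t _ => mul_nonneg (ih r t).1.2 (h0' t s)⟩, fun hp => ?_⟩
    obtain ⟨t, -, ht⟩ := Finset.exists_ne_zero_of_sum_ne_zero hp.ne'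
    have h1 : 0 < (M ^ n) r t := lt_of_le_of_ne (ih r t).1.1 (fun e => ht (by rw [← e, zero_mul]))
    have h2 : 0 < M t s := lt_of_le_of_ne (h0 t s) (fun e => ht (by rw [← e, mul_zero]))
    exact lt_of_lt_of_le (mul_pos ((ih r t).2 h1) (h t s h2))
      (Finset.single_le_sum (f := fun t => (M' ^ n) r t * M' t s)
        (fun t _ => mul_nonneg (ih r t).1.2 (h0' t s)) (Finset.mem_univ t))

lemma exists_Q {m : ℕ} {M : Matrix (Fin m) (Fin m) ℝ}
    (h0 : ∀ r s, 0 ≤ M r s) (hirr : MatIrreducible M) :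
    ∃ Q : Matrix (Fin m) (Fin m) ℝ, (∀ r s, 0 < Q r s) ∧ Q * M = M * Q := by
  choose n hn1 hn using hirr
  let N := (Finset.univ : Finset (Fin m × Fin m)).sup (fun p => n p.1 p.2) + 1
  refine ⟨∑ i ∈ Finset.range N, M ^ i, fun r s => ?_, ?_⟩
  · rw [Matrix.sum_apply]
    refine lt_of_lt_of_le (hn r s) (Finset.single_le_sum (f := fun i => (M ^ i) r s)
      (fun i _ => ((support_pow h0 h0 (fun _ _ h => h) i) r s).1.1) ?_)
    rw [Finset.mem_range]
    exact Nat.lt_succ_of_le (Finset.le_sup (f := fun p : Fin m × Fin m => n p.1 p.2)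
      (Finset.mem_univ (r, s)))
  · rw [Finset.sum_mul, Finset.mul_sum]
    exact Finset.sum_congr rfl fun i _ => by rw [← pow_succ, ← pow_succ']

lemma Q_pos {m : ℕ} {Q : Matrix (Fin m) (Fin m) ℝ} (hQ : ∀ r s, 0 < Q r s)
    {v : Fin m → ℝ} (hv : ∀ r, 0 ≤ v r) (hv0 : v ≠ 0) (r : Fin m) : 0 < (Q.mulVec v) r := by
  obtain ⟨s, hs⟩ := Function.ne_iff.mp hv0
  have hs' : 0 < v s := lt_of_le_of_ne (hv s) (Ne.symm hs)
  exact lt_of_lt_of_le (mul_pos (hQ r s) hs')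
    (Finset.single_le_sum (f := fun t => Q r t * v t)
      (fun t _ => mul_nonneg (hQ r t).le (hv t)) (Finset.mem_univ s))

lemma strict_of_le {m : ℕ} {M : Matrix (Fin m) (Fin m) ℝ}
    (h0 : ∀ r s, 0 ≤ M r s) (hirr : MatIrreducible M) {t : ℝ} {v : Fin m → ℝ}
    (hv : ∀ r, 0 ≤ v r) (hv0 : v ≠ 0) (hle : ∀ r, (M.mulVec v) r ≤ t * v r)
    (hne : M.mulVec v ≠ t • v) :
    ∃ v' : Fin m → ℝ, (∀ r, 0 < v' r) ∧ ∀ r, (M.mulVec v') r < t * v' r := by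
  obtain ⟨Q, hQ, hc⟩ := exists_Q h0 hirr
  refine ⟨Q.mulVec v, Q_pos hQ hv hv0, fun r => ?_⟩
  have := Q_pos hQ (v := t • v - M.mulVec v) (fun r => by simpa using hle r)
    (fun h => hne (sub_eq_zero.mp h).symm) r
  rw [Matrix.mulVec_sub, Matrix.mulVec_smul, Matrix.mulVec_mulVec, hc,
    ← Matrix.mulVec_mulVec] at this
  simpa using this

lemma mulVec_mono {m : ℕ} {M : Matrix (Fin m) (Fin m) ℝ} (h0 : ∀ r s, 0 ≤ M r s)
    {u v : Fin m → ℝ} (h : ∀ r, u r ≤ v r) (r : Fin m) : (M.mulVec u) r ≤ (M.mulVec v) r := by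
  simp only [Matrix.mulVec, dotProduct]
  exact Finset.sum_le_sum fun s _ => mul_le_mul_of_nonneg_left (h s) (h0 r s)

/-- comparison of a vector with a positive one -/
lemma exists_touch {m : ℕ} (hm : 0 < m) (u v : Fin m → ℝ) (hv : ∀ r, 0 < v r) :
    ∃ c : ℝ, ∃ i, u i = c * v i ∧ ∀ r, u r ≤ c * v r := by
  have : Nonempty (Fin m) := ⟨⟨0, hm⟩⟩
  obtain ⟨i, hi⟩ := Finite.exists_max (fun r => u r / v r)
  refine ⟨u i / v i, i, by rw [div_mul_cancel₀ _ (hv i).ne'], fun r => ?_⟩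
  rw [← div_le_iff₀ (hv r)]
  exact hi r

/-- compactness: limits of sub-invariant vectors -/
lemma exists_limit {m : ℕ} (M : ℕ → Matrix (Fin m) (Fin m) ℝ) (M0 : Matrix (Fin m) (Fin m) ℝ)
    (t : ℕ → ℝ) (t0 : ℝ) (hM : ∀ r s, Tendsto (fun n => M n r s) atTop (𝓝 (M0 r s)))
    (ht : Tendsto t atTop (𝓝 t0))
    (v : ℕ → Fin m → ℝ) (hv : ∀ n, v n ∈ stdSimplex ℝ (Fin m))
    (hle : ∀ n r, ((M n).mulVec (v n)) r ≤ t n * v n r) :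
    ∃ v0 ∈ stdSimplex ℝ (Fin m), ∀ r, (M0.mulVec v0) r ≤ t0 * v0 r := by
  obtain ⟨v0, hv0, φ, hφ, hlim⟩ := (isCompact_stdSimplex ℝ (Fin m)).tendsto_subseq hv
  refine ⟨v0, hv0, fun r => ?_⟩
  have hc : ∀ s, Tendsto (fun n => v (φ n) s) atTop (𝓝 (v0 s)) := fun s =>
    (tendsto_pi_nhds.mp hlim) s
  have h1 : Tendsto (fun n => ((M (φ n)).mulVec (v (φ n))) r) atTop
      (𝓝 ((M0.mulVec v0) r)) := by
    simp only [Matrix.mulVec, dotProduct]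
    exact tendsto_finsetSum _ fun s _ => ((hM r s).comp hφ.tendsto_atTop).mul (hc s)
  have h2 : Tendsto (fun n => t (φ n) * v (φ n) r) atTop (𝓝 (t0 * v0 r)) :=
    (ht.comp hφ.tendsto_atTop).mul (hc r)
  exact le_of_tendsto_of_tendsto' h1 h2 (fun n => hle _ _)

lemma normalize {m : ℕ} (hm : 0 < m) {M : Matrix (Fin m) (Fin m) ℝ} {t : ℝ} {v : Fin m → ℝ}
    (hv : ∀ r, 0 < v r) (hle : ∀ r, (M.mulVec v) r ≤ t * v r) :
    ∃ u ∈ stdSimplex ℝ (Fin m), ∀ r, (M.mulVec u) r ≤ t * u r := by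
  have : Nonempty (Fin m) := ⟨⟨0, hm⟩⟩
  have hs : 0 < ∑ r, v r := Finset.sum_pos (fun r _ => hv r) Finset.univ_nonempty
  refine ⟨(∑ r, v r)⁻¹ • v, ⟨fun r => ?_, ?_⟩, fun r => ?_⟩
  · simpa using mul_nonneg (inv_nonneg.mpr hs.le) (hv r).le
  · simp only [Pi.smul_apply, smul_eq_mul, ← Finset.mul_sum]
    exact inv_mul_cancel₀ hs.ne'
  · rw [Matrix.mulVec_smul]
    simp only [Pi.smul_apply, smul_eq_mul]
    calc _ ≤ (∑ r, v r)⁻¹ * (t * v r) := mul_le_mul_of_nonneg_left (hle r) (inv_nonneg.mpr hs.le)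
      _ = _ := by ring

lemma simplex_ne_zero {m : ℕ} {v : Fin m → ℝ} (hv : v ∈ stdSimplex ℝ (Fin m)) : v ≠ 0 := by
  rintro rfl
  simpa using hv.2

lemma perron {m : ℕ} (hm : 0 < m) {M : Matrix (Fin m) (Fin m) ℝ}
    (h0 : ∀ r s, 0 ≤ M r s) (hirr : MatIrreducible M) :
    ∃ v : Fin m → ℝ, (∀ r, 0 < v r) ∧ M.mulVec v = chi M • v := by
  have : Nonempty (Fin m) := ⟨⟨0, hm⟩⟩
  let T : Set ℝ := {t | ∃ v ∈ stdSimplex ℝ (Fin m), ∀ r, (M.mulVec v) r ≤ t * v r}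
  have hTb : BddBelow T := by
    refine ⟨0, ?_⟩
    rintro t ⟨v, hv, hle⟩
    obtain ⟨s, hs⟩ := Function.ne_iff.mp (simplex_ne_zero hv)
    have hs' : 0 < v s := lt_of_le_of_ne (hv.1 s) (Ne.symm hs)
    have : 0 ≤ t * v s := le_trans
      (by
        simp only [Matrix.mulVec, dotProduct]
        exact Finset.sum_nonneg fun k _ => mul_nonneg (h0 s k) (hv.1 k)) (hle s)
    exact nonneg_of_mul_nonneg_left this hs'
  have hTn : T.Nonempty := by
    obtain ⟨c, i, -, hc⟩ := exists_touch hm (M.mulVec 1) 1 (fun _ => one_pos)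
    exact ⟨c, normalize hm (v := 1) (fun _ => one_pos) hc⟩
  obtain ⟨t, -, htlim, htT⟩ := exists_seq_tendsto_sInf hTn hTb
  choose v hv hvle using htT
  obtain ⟨v0, hv0, hle⟩ := exists_limit (fun _ => M) M t (sInf T)
    (fun _ _ => tendsto_const_nhds) htlim v hv hvle
  have heq : M.mulVec v0 = sInf T • v0 := by
    by_contra hne
    obtain ⟨v', hv', hlt⟩ := strict_of_le h0 hirr hv0.1 (simplex_ne_zero hv0) hle hne
    obtain ⟨c, i, hci, hc⟩ := exists_touch hm (M.mulVec v') v' hv'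
    have h1 : c ∈ T := normalize hm hv' hc
    have h2 : c < sInf T := by
      have := hlt i
      rw [hci] at this
      exact lt_of_mul_lt_mul_right this (hv' i).le
    exact absurd (csInf_le hTb h1) (not_le.mpr h2)
  have hpos : ∀ r, 0 < v0 r := by
    obtain ⟨Q, hQ, hc⟩ := exists_Q h0 hirr
    by_contra hcon
    push Not at hcon
    obtain ⟨r, hr⟩ := hcon
    -- powers of M
    have hz : v0 r = 0 := le_antisymm hr (hv0.1 r)
    obtain ⟨s, hs⟩ := Function.ne_iff.mp (simplex_ne_zero hv0)
    have hs' : 0 < v0 s := lt_of_le_of_ne (hv0.1 s) (Ne.symm hs)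
    obtain ⟨n, -, hn⟩ := hirr r s
    have hpw : ∀ n : ℕ, (M ^ n).mulVec v0 = (sInf T) ^ n • v0 := by
      intro n
      induction n with
      | zero => simp
      | succ n ih =>
        rw [pow_succ, ← Matrix.mulVec_mulVec, heq, Matrix.mulVec_smul, ih, smul_smul, pow_succ']
    have h1 := congrFun (hpw n) r
    have h2 : (M ^ n) r s * v0 s ≤ ((M ^ n).mulVec v0) r :=
      Finset.single_le_sum (f := fun t => (M ^ n) r t * v0 t)
        (fun t _ => mul_nonneg ((support_pow h0 h0 (fun _ _ h => h) n) r t).1.1 (hv0.1 t))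
        (Finset.mem_univ s)
    have h3 := mul_pos hn hs'
    rw [h1] at h2
    simp [hz] at h2
    linarith
  have hchi : chi M = sInf T := by
    apply IsGreatest.csSup_eq
    refine ⟨⟨v0, simplex_ne_zero hv0, heq⟩, ?_⟩
    rintro μ ⟨u, hu, hmu⟩
    obtain ⟨c, i, hci, hc⟩ := exists_touch hm (fun r => |u r|) v0 hpos
    have hc0 : 0 < c := by
      obtain ⟨s, hs⟩ := Function.ne_iff.mp hu
      have : 0 < |u s| := abs_pos.mpr hs
      exact pos_of_mul_pos_left (this.trans_le (hc s)) (hpos s).le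
    have h1 : |μ| * (c * v0 i) ≤ c * (sInf T * v0 i) := by
      rw [← hci, ← abs_mul]
      have e1 : μ * u i = (M.mulVec u) i := by rw [hmu]; rfl
      rw [e1]
      calc |(M.mulVec u) i| ≤ ∑ s, |M i s * u s| := by
            simp only [Matrix.mulVec, dotProduct]
            exact Finset.abs_sum_le_sum_abs _ _
        _ = (M.mulVec fun r => |u r|) i := Finset.sum_congr rfl fun s _ => by
            rw [abs_mul, abs_of_nonneg (h0 i s)]
        _ ≤ (M.mulVec (c • v0)) i := mulVec_mono h0 hc i
        _ = _ := by rw [Matrix.mulVec_smul, heq]; rfl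
    have h2 : |μ| * (c * v0 i) ≤ sInf T * (c * v0 i) := by linarith
    exact (le_abs_self μ).trans (le_of_mul_le_mul_right h2 (mul_pos hc0 (hpos i)))
  exact ⟨v0, hpos, by rw [hchi]; exact heq⟩

lemma chi_lt_one {m : ℕ} (hm : 0 < m) {M : Matrix (Fin m) (Fin m) ℝ}
    (h0 : ∀ r s, 0 ≤ M r s) (hirr : MatIrreducible M) {V : Fin m → ℝ}
    (hV : ∀ r, 0 < V r) (hlt : ∀ r, (M.mulVec V) r < V r) : chi M < 1 := by
  obtain ⟨v, hv, heq⟩ := perron hm h0 hirr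
  obtain ⟨c, i, hci, hc⟩ := exists_touch hm v V hV
  have hc0 : 0 < c := pos_of_mul_pos_left (hci ▸ hv i) (hV i).le
  have h1 : chi M * v i < 1 * v i := by
    have e1 : chi M * v i = (M.mulVec v) i := by rw [heq]; rfl
    rw [e1]
    calc (M.mulVec v) i ≤ (M.mulVec (c • V)) i := mulVec_mono h0 hc i
      _ = c * (M.mulVec V) i := by rw [Matrix.mulVec_smul]; rfl
      _ < c * V i := mul_lt_mul_of_pos_left (hlt i) hc0
      _ = _ := by rw [hci, one_mul]
  exact lt_of_mul_lt_mul_right h1 (hv i).le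

lemma eigvec_ge_one {m : ℕ} (hm : 0 < m) {M : Matrix (Fin m) (Fin m) ℝ}
    (h0 : ∀ r s, 0 ≤ M r s) (hirr : MatIrreducible M) :
    ∃ Y : Fin m → ℝ, (∀ r, 1 ≤ Y r) ∧ M.mulVec Y = chi M • Y := by
  have : Nonempty (Fin m) := ⟨⟨0, hm⟩⟩
  obtain ⟨v, hv, heq⟩ := perron hm h0 hirr
  obtain ⟨c, i, hci, hc⟩ := exists_touch hm 1 v hv
  refine ⟨c • v, fun r => hc r, ?_⟩
  rw [Matrix.mulVec_smul, heq, smul_comm]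

/-- super-harmonic functions of an irreducible stochastic matrix are constant -/
lemma const_of_superharmonic {m : ℕ} (hm : 0 < m) {M : Matrix (Fin m) (Fin m) ℝ}
    (h0 : ∀ r s, 0 ≤ M r s) (h1 : ∀ r, ∑ s, M r s = 1) (hirr : MatIrreducible M)
    {h : Fin m → ℝ} (hle : ∀ r, (M.mulVec h) r ≤ h r) : ∃ c, ∀ r, h r = c := by
  have : Nonempty (Fin m) := ⟨⟨0, hm⟩⟩
  obtain ⟨i, hi⟩ := Finite.exists_min h
  refine ⟨h i, fun s => ?_⟩
  obtain ⟨n, -, hn⟩ := hirr i s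
  have hp0 : ∀ n r s, 0 ≤ (M ^ n) r s := fun n r s =>
    ((support_pow h0 h0 (fun _ _ h => h) n) r s).1.1
  have hone : ∀ n : ℕ, (M ^ n).mulVec 1 = 1 := by
    intro n
    induction n with
    | zero => simp
    | succ n ih =>
      rw [pow_succ, ← Matrix.mulVec_mulVec]
      have : M.mulVec 1 = 1 := by
        ext r; simpa [Matrix.mulVec, dotProduct] using h1 r
      rw [this, ih]
  have hpn : ∀ n : ℕ, ∀ r, ((M ^ n).mulVec h) r ≤ h r := by
    intro n
    induction n with
    | zero => simp
    | succ n ih =>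
      intro r
      rw [pow_succ, ← Matrix.mulVec_mulVec]
      exact (mulVec_mono (hp0 n) hle r).trans (ih r)
  have h2 : (M ^ n) i s * (h s - h i) ≤ ∑ t, (M ^ n) i t * (h t - h i) :=
    Finset.single_le_sum (f := fun t => (M ^ n) i t * (h t - h i))
      (fun t _ => mul_nonneg (hp0 n i t) (sub_nonneg.mpr (hi t))) (Finset.mem_univ s)
  have h3 : ∑ t, (M ^ n) i t * (h t - h i) = ((M ^ n).mulVec h) i - h i := by
    have := congrFun (hone n) i
    simp only [Matrix.mulVec, dotProduct, Pi.one_apply, mul_one] at this ⊢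
    simp only [mul_sub, Finset.sum_sub_distrib, ← Finset.sum_mul, this, one_mul]
  have h4 := hpn n i
  have h5 : (M ^ n) i s * (h s - h i) ≤ 0 := by linarith
  have h6 : h s - h i ≤ 0 := by
    by_contra hcon
    push Not at hcon
    have := mul_pos hn hcon
    linarith
  linarith [hi s]

lemma mulVec_const {m : ℕ} {M : Matrix (Fin m) (Fin m) ℝ} (h1 : ∀ r, ∑ s, M r s = 1)
    {h : Fin m → ℝ} {c : ℝ} (hc : ∀ r, h r = c) (r : Fin m) : (M.mulVec h) r = c := by
  simp only [Matrix.mulVec, dotProduct, hc, ← Finset.sum_mul, h1, one_mul]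

lemma poisson {m : ℕ} (hm : 0 < m) {M : Matrix (Fin m) (Fin m) ℝ}
    (h0 : ∀ r s, 0 ≤ M r s) (h1 : ∀ r, ∑ s, M r s = 1) (hirr : MatIrreducible M)
    (d : Fin m → ℝ) : ∃ (g : ℝ) (h : Fin m → ℝ), ∀ r, d r + (M.mulVec h) r - h r = g := by
  let j0 : Fin m := ⟨0, hm⟩
  let L : (Fin m → ℝ) →ₗ[ℝ] (Fin m → ℝ) :=
    { toFun := fun h r => h r - (M.mulVec h) r + h j0
      map_add' := by
        intro x y; ext r; simp only [Matrix.mulVec_add, Pi.add_apply]; ring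
      map_smul' := by
        intro c x; ext r
        simp only [Matrix.mulVec_smul, Pi.smul_apply, smul_eq_mul, RingHom.id_apply]; ring }
  have hinj : Function.Injective L := by
    rw [injective_iff_map_eq_zero]
    intro h hh
    have hr : ∀ r, h r - (M.mulVec h) r + h j0 = 0 := fun r => congrFun hh r
    have key : ∃ c, ∀ r, h r = c := by
      rcases le_total (h j0) 0 with hc | hc
      · exact const_of_superharmonic hm h0 h1 hirr (fun r => by linarith [hr r])
      · obtain ⟨c, hc'⟩ := const_of_superharmonic hm h0 h1 hirr (h := -h) (fun r => by
          rw [Matrix.mulVec_neg]; simp only [Pi.neg_apply]; linarith [hr r])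
        exact ⟨-c, fun r => by rw [← hc' r]; simp⟩
    obtain ⟨c, hc⟩ := key
    ext r
    have h2 := hr r
    rw [mulVec_const h1 hc, hc r, hc j0] at h2
    rw [hc r]; simp only [Pi.zero_apply]; linarith
  obtain ⟨h, hh⟩ := (LinearMap.injective_iff_surjective.mp hinj) d
  refine ⟨h j0, h, fun r => ?_⟩
  have : h r - (M.mulVec h) r + h j0 = d r := congrFun hh r
  linarith

lemma poisson_single {m : ℕ} (hm : 0 < m) {M : Matrix (Fin m) (Fin m) ℝ}
    (h0 : ∀ r s, 0 ≤ M r s) (h1 : ∀ r, ∑ s, M r s = 1) (hirr : MatIrreducible M)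
    (r0 : Fin m) : ∃ g : ℝ, 0 < g ∧ ∃ h : Fin m → ℝ,
      ∀ r, (Pi.single r0 1 : Fin m → ℝ) r + (M.mulVec h) r - h r = g := by
  obtain ⟨g, h, hg⟩ := poisson hm h0 h1 hirr (Pi.single r0 1)
  refine ⟨g, ?_, h, hg⟩
  by_contra hcon
  push Not at hcon
  have hs : ∀ r, 0 ≤ (Pi.single r0 1 : Fin m → ℝ) r := fun r => by
    by_cases h : r = r0
    · subst h; simp
    · simp [h]
  obtain ⟨c, hc⟩ := const_of_superharmonic hm h0 h1 hirr (h := h)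
    (fun r => by linarith [hg r, hs r])
  have := hg r0
  rw [mulVec_const h1 hc, hc r0] at this
  simp at this
  linarith

/-! ### Analytic lemmas on the generating function -/

section analytic

variable {m : ℕ} {A : ℤ → Matrix (Fin m) (Fin m) ℝ}

lemma summable_A (hphase : PhaseStochastic A) (r s : Fin m) : Summable fun k => A k r s :=
  (hphase r).summable.comp_injective (i := fun k : ℤ => (k, s))
    (fun _ _ h => (Prod.mk.inj h).1)

lemma matA_nonneg (hA0 : ∀ k r s, 0 ≤ A k r s) (r s : Fin m) : 0 ≤ matA A r s :=
  tsum_nonneg fun k => hA0 k r s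

lemma matA_row (hphase : PhaseStochastic A) (r : Fin m) : ∑ s, matA A r s = 1 := by
  have h1 : HasSum (fun p : Fin m × ℤ => A p.2 r p.1) 1 :=
    ((Equiv.prodComm (Fin m) ℤ).hasSum_iff (f := fun p : ℤ × Fin m => A p.1 r p.2)).mpr (hphase r)
  have h2 := h1.prod_fiberwise (fun s => (summable_A hphase r s).hasSum)
  exact (hasSum_fintype _).unique h2

lemma exists_radius {z : ℝ} (hz0 : 0 ≤ z) (c : ℕ → ℝ) (h1 : ENNReal.ofReal z < radius c) :
    ∃ ρ : ℝ, z < ρ ∧ Summable fun k => c k * ρ ^ k := by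
  unfold radius at h1
  obtain ⟨ρ, h2⟩ := lt_iSup_iff.mp h1
  obtain ⟨hρ, hlt⟩ := lt_iSup_iff.mp h2
  refine ⟨ρ, ?_, hρ⟩
  have h3 := (ENNReal.ofReal_lt_iff_lt_toReal hz0 ENNReal.coe_ne_top).mp hlt
  exact h3

lemma lt_radius {x : ℝ≥0∞} (hx : x < phiA A) (r s : Fin m) :
    x < radius fun k => A ((k : ℤ) + 1) r s := by
  unfold phiA at hx
  exact lt_of_lt_of_le hx
    (iInf₂_le (f := fun r s : Fin m => radius fun k => A ((k : ℤ) + 1) r s) r s)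

lemma summable_neg_pow (hA0 : ∀ k r s, 0 ≤ A k r s) (hphase : PhaseStochastic A) {z : ℝ}
    (hz : 1 ≤ z) (r s : Fin m) :
    Summable fun n : ℕ => A (-(n : ℤ)) r s * z ^ (-(n : ℤ)) := by
  have hz0 : 0 < z := by linarith
  have hs : Summable fun n : ℕ => A (-(n : ℤ)) r s :=
    (summable_A hphase r s).comp_injective
      (i := fun n : ℕ => -(n : ℤ)) (fun a b h => by simpa using h)
  refine Summable.of_nonneg_of_le (fun n => mul_nonneg (hA0 _ _ _) (zpow_nonneg hz0.le _))
    (fun n => ?_) hs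
  refine mul_le_of_le_one_right (hA0 _ _ _) ?_
  exact zpow_le_one_of_nonpos₀ hz (by simp)

lemma summable_pow (hA0 : ∀ k r s, 0 ≤ A k r s) (hphase : PhaseStochastic A) {z : ℝ}
    (hz : 1 ≤ z) (hzp : ENNReal.ofReal z < phiA A) (r s : Fin m) :
    Summable fun k : ℤ => A k r s * z ^ k := by
  have hz0 : 0 < z := by linarith
  have h1 : ENNReal.ofReal z < radius fun k => A ((k : ℤ) + 1) r s :=
    lt_radius hzp r s
  obtain ⟨ρ, hlt', hρ⟩ := exists_radius hz0.le _ h1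
  have hp1 : Summable fun n : ℕ => A (n : ℤ) r s * z ^ (n : ℤ) := by
    refine (summable_nat_add_iff (f := fun n : ℕ => A (n : ℤ) r s * z ^ (n : ℤ)) 1).mp ?_
    refine Summable.of_nonneg_of_le (fun n => mul_nonneg (hA0 _ _ _) (zpow_nonneg hz0.le _))
      (fun n => ?_) (hρ.mul_left z)
    have e : z ^ ((n + 1 : ℕ) : ℤ) = z * z ^ n := by rw [zpow_natCast, pow_succ']
    rw [e]
    have : z ^ n ≤ ρ ^ n := pow_le_pow_left₀ hz0.le hlt'.le n
    have e2 : ((n + 1 : ℕ) : ℤ) = (n : ℤ) + 1 := by push_cast; rfl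
    rw [e2]
    calc A ((n : ℤ) + 1) r s * (z * z ^ n) = z * (A ((n : ℤ) + 1) r s * z ^ n) := by ring
      _ ≤ _ := by
        apply mul_le_mul_of_nonneg_left _ hz0.le
        exact mul_le_mul_of_nonneg_left this (hA0 _ _ _)
  have hp2 := summable_neg_pow hA0 hphase hz r s
  exact Summable.of_nat_of_neg hp1 hp2

lemma slope_nat_bound {w z : ℝ} (hw : 1 < w) (hwz : w ≤ z) (n : ℕ) :
    0 ≤ (w ^ n - 1) / (w - 1) ∧ (w ^ n - 1) / (w - 1) ≤ z ^ n / (z - 1) := by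
  have hw1 : 0 < w - 1 := by linarith
  have hz1 : 0 < z - 1 := by linarith
  rw [← geom_sum_eq hw.ne']
  refine ⟨Finset.sum_nonneg fun i _ => pow_nonneg (by linarith) _, ?_⟩
  calc ∑ i ∈ Finset.range n, w ^ i ≤ ∑ i ∈ Finset.range n, z ^ i :=
        Finset.sum_le_sum fun i _ => pow_le_pow_left₀ (by linarith) hwz i
    _ = (z ^ n - 1) / (z - 1) := geom_sum_eq (by linarith) n
    _ ≤ _ := by gcongr; linarith

lemma slope_bound {w z : ℝ} (hw : 1 < w) (hwz : w ≤ z) (k q : ℤ)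
    (hq : (0 ≤ k ∧ q = k) ∨ q ≤ 0) :
    |(w ^ q - 1) / (w - 1)| ≤ |(q : ℝ)| + z ^ k / (z - 1) := by
  have hw1 : 0 < w - 1 := by linarith
  have hz1 : 0 < z - 1 := by linarith
  have hzk : 0 ≤ z ^ k / (z - 1) := div_nonneg (zpow_nonneg (by linarith) _) hz1.le
  rcases hq with ⟨hk, rfl⟩ | hq
  · lift q to ℕ using hk
    obtain ⟨h1, h2⟩ := slope_nat_bound hw hwz q
    simp only [zpow_natCast] at *
    rw [abs_of_nonneg h1]
    have := abs_nonneg (((q : ℤ) : ℝ))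
    linarith
  · obtain ⟨p, rfl⟩ : ∃ p : ℕ, q = -(p : ℤ) := ⟨q.natAbs, by omega⟩
    have hwi : 0 < w⁻¹ := inv_pos.mpr (by linarith)
    have h1 := one_add_mul_le_pow (a := w⁻¹ - 1) (by linarith) p
    rw [add_sub_cancel] at h1
    have h2 : w⁻¹ ^ p ≤ 1 := pow_le_one₀ hwi.le (inv_le_one_of_one_le₀ hw.le)
    have e : w ^ (-(p : ℤ)) = w⁻¹ ^ p := by rw [zpow_neg, zpow_natCast, inv_pow]
    rw [e, abs_div, abs_of_pos hw1, abs_of_nonpos (by linarith)]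
    have h3 : 1 - w⁻¹ ≤ w - 1 := by
      have : w * w⁻¹ = 1 := mul_inv_cancel₀ (by linarith)
      nlinarith
    have h4 : -(w⁻¹ ^ p - 1) / (w - 1) ≤ p := by
      rw [div_le_iff₀ hw1]
      have : (p : ℝ) * (1 - w⁻¹) ≤ p * (w - 1) :=
        mul_le_mul_of_nonneg_left h3 (Nat.cast_nonneg p)
      linarith
    have h5 : |((-(p : ℤ) : ℤ) : ℝ)| = p := by simp
    rw [h5]
    linarith

lemma slope_tendsto (q : ℤ) :
    Tendsto (fun w : ℝ => (w ^ q - 1) / (w - 1)) (𝓝[>] 1) (𝓝 (q : ℝ)) := by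
  have h := hasDerivAt_zpow q (1 : ℝ) (Or.inl one_ne_zero)
  rw [hasDerivAt_iff_tendsto_slope] at h
  simp only [one_zpow, mul_one] at h
  refine (h.mono_left (nhdsWithin_mono _ (fun x hx => ne_of_gt hx))).congr (fun w => ?_)
  rw [slope_def_field, one_zpow]

lemma AstarR_nonneg (hA0 : ∀ k r s, 0 ≤ A k r s) {z : ℝ} (hz : 0 ≤ z) (r s : Fin m) :
    0 ≤ AstarR A z r s :=
  tsum_nonneg fun k => mul_nonneg (hA0 k r s) (zpow_nonneg hz k)

lemma AstarR_irr (hA0 : ∀ k r s, 0 ≤ A k r s) (hphase : PhaseStochastic A)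
    (hirr : MatIrreducible (matA A)) {z : ℝ}
    (hz : 1 ≤ z) (hzp : ENNReal.ofReal z < phiA A) : MatIrreducible (AstarR A z) := by
  have hz0 : 0 < z := by linarith
  intro r s
  obtain ⟨n, hn, hp⟩ := hirr r s
  refine ⟨n, hn, ((support_pow (matA_nonneg hA0) (AstarR_nonneg hA0 hz0.le) ?_ n) r s).2 hp⟩
  intro r s h
  have h : 0 < ∑' k : ℤ, A k r s := h
  have : ∃ k, A k r s ≠ 0 := by
    by_contra hcon
    push Not at hcon
    simp [hcon] at h
  obtain ⟨k, hk⟩ := this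
  have hk' : 0 < A k r s := lt_of_le_of_ne (hA0 k r s) (Ne.symm hk)
  exact (summable_pow hA0 hphase hz hzp r s).tsum_pos
    (fun k => mul_nonneg (hA0 k r s) (zpow_nonneg hz0.le k)) k
    (mul_pos hk' (zpow_pos hz0 k))

lemma AstarR_cont (hA0 : ∀ k r s, 0 ≤ A k r s) (hphase : PhaseStochastic A) {z : ℝ}
    (hz : 1 ≤ z) (hzp : ENNReal.ofReal z < phiA A) (r s : Fin m) :
    ContinuousOn (fun w => AstarR A w r s) (Set.Icc 1 z) := by
  have hz0 : 0 < z := by linarith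
  change ContinuousOn (fun w => ∑' k : ℤ, A k r s * w ^ k) (Set.Icc 1 z)
  refine continuousOn_tsum (u := fun k => A k r s + A k r s * z ^ k) ?_
    ((summable_A hphase r s).add (summable_pow hA0 hphase hz hzp r s)) ?_
  · intro k
    refine continuousOn_const.mul (continuousOn_id.zpow₀ k fun w hw => Or.inl ?_)
    have := hw.1
    simp only [id]; linarith
  · intro k w hw
    have hw0 : 0 < w := by linarith [hw.1]
    rw [Real.norm_of_nonneg (mul_nonneg (hA0 _ _ _) (zpow_nonneg hw0.le k))]
    have : w ^ k ≤ 1 + z ^ k := by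
      rcases le_total 0 k with h | h
      · have := zpow_le_zpow_left₀ h hw0.le hw.2
        linarith
      · have := zpow_le_one_of_nonpos₀ hw.1 h
        have := zpow_pos hz0 k
        linarith
    calc _ ≤ A k r s * (1 + z ^ k) := mul_le_mul_of_nonneg_left this (hA0 _ _ _)
      _ = _ := by ring

/-- negative (possibly truncated) drift gives a strictly sub-invariant vector near `1`. -/
lemma near_one (hA0 : ∀ k r s, 0 ≤ A k r s) (hphase : PhaseStochastic A) {z : ℝ}
    (hz : 1 < z) (hzp : ENNReal.ofReal z < phiA A) (q : ℤ → ℤ)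
    (hq : ∀ k, (0 ≤ k ∧ q k = k) ∨ q k ≤ 0) (hkq : ∀ k, k ≤ q k)
    (hsum : ∀ r s, Summable fun k => A k r s * |(q k : ℝ)|) (h : Fin m → ℝ)
    (hneg : ∀ r, (∑ s, ∑' k, A k r s * (q k : ℝ)) + ((matA A).mulVec h) r - h r < 0) :
    ∃ w ∈ Set.Ioo 1 z, ∃ V : Fin m → ℝ, (∀ r, 0 < V r) ∧
      ∀ r, ((AstarR A w).mulVec V) r < V r := by
  let b : ℝ → Fin m → Fin m → ℝ := fun w r s => ∑' k, A k r s * ((w ^ q k - 1) / (w - 1))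
  let bd : Fin m → Fin m → ℤ → ℝ := fun r s k => A k r s * |(q k : ℝ)| + A k r s * z ^ k / (z - 1)
  have hbd : ∀ r s, Summable (bd r s) := fun r s =>
    (hsum r s).add ((summable_pow hA0 hphase hz.le hzp r s).div_const _)
  have hbound : ∀ r s, ∀ w ∈ Set.Ioo 1 z, ∀ k,
      ‖A k r s * ((w ^ q k - 1) / (w - 1))‖ ≤ bd r s k := by
    intro r s w hw k
    rw [norm_mul, Real.norm_of_nonneg (hA0 _ _ _), Real.norm_eq_abs]
    calc _ ≤ A k r s * (|(q k : ℝ)| + z ^ k / (z - 1)) :=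
          mul_le_mul_of_nonneg_left (slope_bound hw.1 hw.2.le k (q k) (hq k)) (hA0 _ _ _)
      _ = _ := by simp only [bd]; ring
  have hIoo : ∀ᶠ w in 𝓝[>] (1 : ℝ), w ∈ Set.Ioo 1 z := Ioo_mem_nhdsGT hz
  have hb : ∀ r s, Tendsto (fun w => b w r s) (𝓝[>] 1) (𝓝 (∑' k, A k r s * (q k : ℝ))) := by
    intro r s
    refine tendsto_tsum_of_dominated_convergence (hbd r s)
      (fun k => (slope_tendsto (q k)).const_mul _) ?_
    filter_upwards [hIoo] with w hw k using hbound r s w hw k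
  have hw0 : Tendsto (fun w : ℝ => w - 1) (𝓝[>] 1) (𝓝 0) := by
    have : Tendsto (fun w : ℝ => w - 1) (𝓝 1) (𝓝 (1 - 1)) := tendsto_id.sub_const 1
    rw [sub_self] at this
    exact this.mono_left nhdsWithin_le_nhds
  have hE : ∀ r, ∀ᶠ w in 𝓝[>] (1 : ℝ),
      (∑ s, b w r s) + ((matA A).mulVec h) r - h r + (w - 1) * ∑ s, b w r s * h s < 0 := by
    intro r
    have h1 : Tendsto (fun w => (∑ s, b w r s) + ((matA A).mulVec h) r - h r
        + (w - 1) * ∑ s, b w r s * h s) (𝓝[>] 1)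
        (𝓝 ((∑ s, ∑' k, A k r s * (q k : ℝ)) + ((matA A).mulVec h) r - h r
        + 0 * ∑ s, (∑' k, A k r s * (q k : ℝ)) * h s)) := by
      refine (((tendsto_finsetSum _ fun s _ => hb r s).add_const _).sub_const _).add
        (hw0.mul (tendsto_finsetSum _ fun s _ => (hb r s).mul_const _))
    refine h1.eventually_lt_const ?_
    rw [zero_mul, add_zero]
    exact hneg r
  have hV : ∀ r, ∀ᶠ w in 𝓝[>] (1 : ℝ), 0 < 1 + (w - 1) * h r := by
    intro r
    have h1 := (hw0.mul_const (h r)).const_add 1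
    refine h1.eventually_const_lt ?_
    simp
  obtain ⟨w, hw, hEw, hVw⟩ :=
    (hIoo.and ((eventually_all.mpr hE).and (eventually_all.mpr hV))).exists
  refine ⟨w, hw, fun r => 1 + (w - 1) * h r, hVw, fun r => ?_⟩
  have hw1 : 0 < w - 1 := by linarith [hw.1]
  have hwp : 0 < w := by linarith
  have hle : ∀ s, AstarR A w r s ≤ matA A r s + (w - 1) * b w r s := by
    intro s
    have hbs : Summable fun k => A k r s * ((w ^ q k - 1) / (w - 1)) :=
      Summable.of_norm_bounded (hbd r s) (hbound r s w hw)
    have e : matA A r s + (w - 1) * b w r s = ∑' k, A k r s * w ^ q k := by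
      change ∑' k, A k r s + (w - 1) * ∑' k, A k r s * ((w ^ q k - 1) / (w - 1)) = _
      rw [← tsum_mul_left, ← (summable_A hphase r s).tsum_add (hbs.mul_left _)]
      refine tsum_congr fun k => ?_
      field_simp
      ring
    have hs2 : Summable fun k => A k r s * w ^ q k := by
      refine ((summable_A hphase r s).add (hbs.mul_left (w - 1))).congr fun k => ?_
      field_simp
      ring
    rw [e]
    have hwphi : ENNReal.ofReal w < phiA A :=
      lt_of_le_of_lt (ENNReal.ofReal_le_ofReal hw.2.le) hzp
    exact (summable_pow hA0 hphase hw.1.le hwphi r s).tsum_le_tsum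
      (fun k => mul_le_mul_of_nonneg_left (zpow_le_zpow_right₀ hw.1.le (hkq k)) (hA0 _ _ _)) hs2
  have h1 : ((AstarR A w).mulVec fun r => 1 + (w - 1) * h r) r ≤
      ∑ s, (matA A r s + (w - 1) * b w r s) * (1 + (w - 1) * h s) := by
    simp only [Matrix.mulVec, dotProduct]
    exact Finset.sum_le_sum fun s _ => mul_le_mul_of_nonneg_right (hle s) (hVw s).le
  have h2 : ∑ s, (matA A r s + (w - 1) * b w r s) * (1 + (w - 1) * h s)
      = 1 + (w - 1) * ((∑ s, b w r s) + ((matA A).mulVec h) r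
        + (w - 1) * ∑ s, b w r s * h s) := by
    refine Eq.trans ?_ (congrArg (fun x => x + (w - 1) * ((∑ s, b w r s) + ((matA A).mulVec h) r
        + (w - 1) * ∑ s, b w r s * h s)) (matA_row hphase r))
    simp only [Matrix.mulVec, dotProduct, Finset.mul_sum, ← Finset.sum_add_distrib]
    exact Finset.sum_congr rfl fun s _ => by ring
  have h3 := mul_neg_of_pos_of_neg hw1 (hEw r)
  rw [h2] at h1
  linarith

lemma not_omega {z w : ℝ} (hw : 1 < w) (hwz : w ≤ z)
    (hz : ENNReal.ofReal z < min (phiA A) (eta A)) {V : Fin m → ℝ} (hV : V ≠ 0) :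
    (AstarR A w).mulVec V ≠ V := by
  intro heq
  have hwn : ‖(w : ℂ)‖ = w := by
    rw [Complex.norm_real, Real.norm_of_nonneg (by linarith)]
  have hle := ENNReal.ofReal_le_ofReal hwz
  have hmem : (w : ℂ) ∈ Omega A := by
    refine ⟨by rw [hwn]; exact hw, ?_, ?_⟩
    · rw [hwn]
      exact hle.trans_lt (lt_of_lt_of_le hz (min_le_left _ _))
    · have hdet : (1 - AstarR A w).det = 0 := by
        rw [← Matrix.exists_mulVec_eq_zero_iff]
        exact ⟨V, hV, by rw [Matrix.sub_mulVec, heq, Matrix.one_mulVec, sub_self]⟩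
      have e : (1 - AstarC A (w : ℂ)) = (Complex.ofRealHom.mapMatrix (1 - AstarR A w)) := by
        rw [map_sub, map_one]
        congr 1
        ext r s
        simp only [AstarC, AstarR, Matrix.of_apply, RingHom.mapMatrix_apply, Matrix.map_apply,
          Complex.ofRealHom_eq_coe, Complex.ofReal_tsum]
        exact tsum_congr fun k => by push_cast; rfl
      rw [e, ← RingHom.map_det, hdet, map_zero]
  have h1 : eta A ≤ ENNReal.ofReal w := by
    refine sInf_le ⟨w, hmem, ?_⟩
    simp only [hwn]
  exact absurd (h1.trans hle) (not_le.mpr (lt_of_lt_of_le hz (min_le_right _ _)))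

lemma propagate (hm : 0 < m) (hA0 : ∀ k r s, 0 ≤ A k r s) (hphase : PhaseStochastic A)
    (hirr : MatIrreducible (matA A)) {z w0 : ℝ} (hw0 : w0 ∈ Set.Ioo 1 z)
    (hz : ENNReal.ofReal z < min (phiA A) (eta A))
    (h0 : ∃ V : Fin m → ℝ, (∀ r, 0 < V r) ∧ ∀ r, ((AstarR A w0).mulVec V) r < V r) :
    ∃ V : Fin m → ℝ, (∀ r, 0 < V r) ∧ ∀ r, ((AstarR A z).mulVec V) r < V r := by
  have hz1 : 1 ≤ z := (hw0.1.trans hw0.2).le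
  have hzp : ENNReal.ofReal z < phiA A := lt_of_lt_of_le hz (min_le_left _ _)
  let T : Set ℝ := {w | ∃ V : Fin m → ℝ, (∀ r, 0 < V r) ∧ ∀ r, ((AstarR A w).mulVec V) r < V r}
  have hcont := fun r s => AstarR_cont hA0 hphase hz1 hzp r s
  have hsub : Set.Icc w0 z ⊆ T := by
    apply IsClosed.Icc_subset_of_forall_exists_gt
    · apply IsSeqClosed.isClosed
      intro w x hw hx
      have hxI : x ∈ Set.Icc w0 z :=
        isClosed_Icc.mem_of_tendsto hx (Eventually.of_forall fun n => (hw n).2)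
      refine ⟨?_, hxI⟩
      have hx1 : 1 < x := hw0.1.trans_le hxI.1
      have hu : ∀ n, ∃ u ∈ stdSimplex ℝ (Fin m), ∀ r, ((AstarR A (w n)).mulVec u) r ≤ 1 * u r := by
        intro n
        obtain ⟨V, hV, hlt⟩ := (hw n).1
        exact normalize hm hV (fun r => by rw [one_mul]; exact (hlt r).le)
      choose u hu hule using hu
      obtain ⟨v, hv, hle⟩ := exists_limit (fun n => AstarR A (w n)) (AstarR A x) (fun _ => 1) 1
        (fun r s => by
          refine ((hcont r s) x ⟨hx1.le, hxI.2⟩).tendsto.comp ?_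
          refine tendsto_nhdsWithin_iff.mpr ⟨hx, Eventually.of_forall fun n => ?_⟩
          exact ⟨(hw0.1.trans_le (hw n).2.1).le, (hw n).2.2⟩) tendsto_const_nhds u hu hule
      have hxp : ENNReal.ofReal x < phiA A :=
        lt_of_le_of_lt (ENNReal.ofReal_le_ofReal hxI.2) hzp
      obtain ⟨V, hV, hlt⟩ := strict_of_le (AstarR_nonneg hA0 (by linarith))
        (AstarR_irr hA0 hphase hirr hx1.le hxp) hv.1 (simplex_ne_zero hv) hle
        (by rw [one_smul]; exact not_omega hx1 hxI.2 hz (simplex_ne_zero hv))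
      exact ⟨V, hV, fun r => by simpa using hlt r⟩
    · exact h0
    · rintro x ⟨⟨V, hV, hlt⟩, hxI⟩ y hy
      have hx1 : 1 < x := hw0.1.trans_le hxI.1
      have hev : ∀ r, ∀ᶠ w in 𝓝[>] x, ((AstarR A w).mulVec V) r < V r := by
        intro r
        have : Tendsto (fun w => ((AstarR A w).mulVec V) r) (𝓝[>] x)
            (𝓝 (((AstarR A x).mulVec V) r)) := by
          simp only [Matrix.mulVec, dotProduct]
          refine tendsto_finsetSum _ fun s _ => Tendsto.mul_const _ ?_
          rw [← nhdsWithin_Ioc_eq_nhdsGT hxI.2]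
          exact ((hcont r s) x ⟨hx1.le, hxI.2.le⟩).mono
            (fun w hw => ⟨hx1.le.trans hw.1.le, hw.2⟩)
        exact this.eventually_lt_const (hlt r)
      obtain ⟨w, hw1, hw2⟩ := ((eventually_all.mpr hev).and (Ioc_mem_nhdsGT hy)).exists
      exact ⟨w, ⟨V, hV, hw1⟩, hw2⟩
  exact hsub ⟨hw0.2.le, le_rfl⟩

lemma summable_pos_part (hA0 : ∀ k r s, 0 ≤ A k r s) (hphase : PhaseStochastic A) {z : ℝ}
    (hz : 1 < z) (hzp : ENNReal.ofReal z < phiA A) (r s : Fin m) :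
    Summable fun k : ℤ => A k r s * max (k : ℝ) 0 := by
  have hz1 : 0 < z - 1 := by linarith
  refine Summable.of_nonneg_of_le (fun k => mul_nonneg (hA0 _ _ _) (le_max_right _ _))
    (fun k => ?_) ((summable_pow hA0 hphase hz.le hzp r s).div_const (z - 1))
  rw [mul_div_assoc]
  refine mul_le_mul_of_nonneg_left ?_ (hA0 _ _ _)
  rw [le_div_iff₀ hz1]
  have hp := zpow_pos (show 0 < z by linarith) k
  rcases le_total 0 k with h | h
  · lift k to ℕ using h
    rw [max_eq_left (by positivity), zpow_natCast]
    have := one_add_mul_le_pow (a := z - 1) (by linarith) k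
    rw [add_sub_cancel] at this
    push_cast
    linarith
  · rw [max_eq_right (by exact_mod_cast h)]
    linarith

/-- If the negative part of the drift is infinite, there is a sub-invariant vector near `1`. -/
lemma start_infinite (hm : 0 < m) (hA0 : ∀ k r s, 0 ≤ A k r s) (hphase : PhaseStochastic A)
    (hirr : MatIrreducible (matA A)) {z : ℝ} (hz : 1 < z) (hzp : ENNReal.ofReal z < phiA A)
    (r0 s0 : Fin m) (hns : ¬ Summable fun k : ℤ => A k r0 s0 * |(k : ℝ)|) :
    ∃ w ∈ Set.Ioo 1 z, ∃ V : Fin m → ℝ, (∀ r, 0 < V r) ∧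
      ∀ r, ((AstarR A w).mulVec V) r < V r := by
  have hpp := summable_pos_part hA0 hphase hz hzp
  let km : ℕ → ℤ → ℝ := fun K k => min (max (-(k : ℝ)) 0) K
  have hkm0 : ∀ K k, 0 ≤ km K k := fun K k => le_min (le_max_right _ _) (Nat.cast_nonneg K)
  have hkms : ∀ K r s, Summable fun k => A k r s * km K k := fun K r s =>
    Summable.of_nonneg_of_le (fun k => mul_nonneg (hA0 _ _ _) (hkm0 K k))
      (fun k => mul_le_mul_of_nonneg_left (min_le_right _ _) (hA0 _ _ _))
      ((summable_A hphase r s).mul_right (K : ℝ))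
  have hunb : ∀ C : ℝ, ∃ K : ℕ, C < ∑' k, A k r0 s0 * km K k := by
    intro C
    by_contra hcon
    push Not at hcon
    apply hns
    have hneg : Summable fun k : ℤ => A k r0 s0 * max (-(k : ℝ)) 0 := by
      refine summable_of_sum_le (c := C)
        (fun k => mul_nonneg (hA0 _ _ _) (le_max_right _ _)) (fun u => ?_)
      let K : ℕ := u.sup fun k => k.natAbs
      refine le_trans (le_of_eq (Finset.sum_congr rfl fun k hk => ?_))
        (((hkms K r0 s0).sum_le_tsum u
          (fun k _ => mul_nonneg (hA0 _ _ _) (hkm0 K k))).trans (hcon K))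
      congr 1
      symm
      apply min_eq_left
      have h1 : k.natAbs ≤ K := Finset.le_sup (f := fun k : ℤ => k.natAbs) hk
      have h2 : (k.natAbs : ℝ) ≤ K := by exact_mod_cast h1
      rw [Nat.cast_natAbs, Int.cast_abs] at h2
      exact max_le ((neg_le_abs _).trans h2) (Nat.cast_nonneg K)
    refine ((hpp r0 s0).add hneg).congr fun k => ?_
    rw [← mul_add]
    congr 1
    rcases le_total 0 (k : ℝ) with h | h
    · rw [max_eq_left h, max_eq_right (by linarith), abs_of_nonneg h, add_zero]
    · rw [max_eq_right h, max_eq_left (by linarith), abs_of_nonpos h, zero_add]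
  obtain ⟨g, hg, h, hh⟩ := poisson_single hm (matA_nonneg hA0) (matA_row hphase) hirr r0
  let D : Fin m → ℝ := fun r => ∑ s, ∑' k : ℤ, A k r s * max (k : ℝ) 0
  have hD0 : ∀ r, 0 ≤ D r := fun r => Finset.sum_nonneg fun s _ =>
    tsum_nonneg fun k => mul_nonneg (hA0 _ _ _) (le_max_right _ _)
  obtain ⟨K, hK⟩ := hunb ((∑ r, D r) / g)
  set t := ∑' k, A k r0 s0 * km K k with ht
  rw [div_lt_iff₀ hg] at hK
  have hqr : ∀ k : ℤ, ((max k (-(K : ℤ)) : ℤ) : ℝ) = max (k : ℝ) 0 - km K k := by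
    intro k
    have hK0 : (0 : ℝ) ≤ K := Nat.cast_nonneg K
    simp only [km]
    push_cast
    rcases le_total 0 (k : ℝ) with h | h
    · rw [max_eq_left h, max_eq_right (show -(k : ℝ) ≤ 0 by linarith), min_eq_left hK0,
        max_eq_left (by linarith), sub_zero]
    · rw [max_eq_right h, max_eq_left (show 0 ≤ -(k : ℝ) by linarith), zero_sub, ← max_neg_neg,
        neg_neg]
  refine near_one hA0 hphase hz hzp (fun k => max k (-(K : ℤ))) (fun k => ?_)
    (fun k => le_max_left _ _) (fun r s => ?_) (fun r => -t * h r) (fun r => ?_)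
  · rcases le_total 0 k with h | h
    · exact Or.inl ⟨h, max_eq_left (by omega)⟩
    · exact Or.inr (max_le h (by omega))
  · refine Summable.of_nonneg_of_le (fun k => mul_nonneg (hA0 _ _ _) (abs_nonneg _)) (fun k => ?_)
      ((hpp r s).add (hkms K r s))
    rw [← mul_add, hqr]
    refine mul_le_mul_of_nonneg_left ?_ (hA0 _ _ _)
    have := hkm0 K k
    have := le_max_right (k : ℝ) 0
    rw [abs_le]; constructor <;> linarith
  · have e1 : ∑ s, ∑' k : ℤ, A k r s * ((max k (-(K : ℤ)) : ℤ) : ℝ)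
        = D r - ∑ s, ∑' k, A k r s * km K k := by
      rw [← Finset.sum_sub_distrib]
      refine Finset.sum_congr rfl fun s _ => ?_
      rw [← (hpp r s).tsum_sub (hkms K r s)]
      exact tsum_congr fun k => by rw [hqr, mul_sub]
    have e2 : t * (Pi.single r0 1 : Fin m → ℝ) r ≤ ∑ s, ∑' k, A k r s * km K k := by
      have hnn : ∀ s, 0 ≤ ∑' k, A k r s * km K k := fun s =>
        tsum_nonneg fun k => mul_nonneg (hA0 _ _ _) (hkm0 K k)
      by_cases hr : r = r0
      · subst hr
        rw [Pi.single_eq_same, mul_one]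
        exact Finset.single_le_sum (f := fun s => ∑' k, A k r s * km K k)
          (fun s _ => hnn s) (Finset.mem_univ s0)
      · rw [Pi.single_eq_of_ne hr, mul_zero]
        exact Finset.sum_nonneg fun s _ => hnn s
    have e3 : ((matA A).mulVec fun r => -t * h r) r = -t * ((matA A).mulVec h) r := by
      have : (fun r => -t * h r) = (-t) • h := rfl
      rw [this, Matrix.mulVec_smul]; rfl
    have e4 : D r ≤ ∑ r, D r := Finset.single_le_sum (fun r _ => hD0 r) (Finset.mem_univ r)
    rw [e1, e3]
    have e5 : t * (Pi.single r0 1 : Fin m → ℝ) r + t * ((matA A).mulVec h) r - t * h r = t * g := by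
      rw [← hh r]; ring
    linarith

end analytic

/-! ### Positive recurrence excludes nonnegative drift -/

section recurrence

variable {m : ℕ} {A B : ℤ → Matrix (Fin m) (Fin m) ℝ}

lemma hasSum_prod_fin (u : ℤ → Fin m → ℝ) (hu : ∀ s, Summable fun k => u k s) :
    HasSum (fun p : ℤ × Fin m => u p.1 p.2) (∑ s, ∑' k, u k s) := by
  have h1 : ∀ s, HasSum (fun p : ℤ × Fin m => if p.2 = s then u p.1 s else 0) (∑' k, u k s) := by
    intro s
    have hinj : Function.Injective (fun k : ℤ => (k, s)) := fun _ _ h => (Prod.mk.inj h).1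
    refine (hinj.hasSum_iff (f := fun p : ℤ × Fin m => if p.2 = s then u p.1 s else 0) ?_).mp ?_
    · rintro ⟨k, t⟩ hp
      have : t ≠ s := fun h => hp ⟨k, by rw [h]⟩
      simp [this]
    · refine (hu s).hasSum.congr_fun ?_ |> fun h => h
      intro k
      simp
  have h2 := hasSum_sum (s := Finset.univ) (fun s _ => h1 s)
  refine h2.congr_fun fun p => ?_
  simp

lemma hasSum_P (i : ℕ) (j : Fin m) (F : ℤ → Fin m → ℝ) (hF : ∀ l ≤ 0, ∀ s, F l s = 0) {a : ℝ}
    (h : HasSum (fun p : ℤ × Fin m => A p.1 j p.2 * F (p.1 + (i + 1)) p.2) a) :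
    HasSum (fun y : S m => P A B (i + 1, j) y * F (y.1 : ℤ) y.2) a := by
  let e : S m → ℤ × Fin m := fun y => ((y.1 : ℤ) - (i + 1), y.2)
  have he : Function.Injective e := by
    rintro ⟨a, b⟩ ⟨c, d⟩ h
    simp only [e, Prod.mk.injEq] at h
    obtain ⟨h1, h2⟩ := h
    ext
    · simp only; omega
    · simp [h2]
  have h1 := (he.hasSum_iff
    (f := fun p : ℤ × Fin m => A p.1 j p.2 * F (p.1 + (i + 1)) p.2) ?_).mpr h
  · refine h1.congr_fun fun y => ?_
    obtain ⟨l, s⟩ := y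
    cases l with
    | zero => simp [e, hF 0 le_rfl]
    | succ l =>
      simp only [e, Function.comp, P]
      have e1 : ((l + 1 : ℕ) : ℤ) - (i + 1) = (l : ℤ) - i := by push_cast; ring
      rw [e1]
      congr 2
      push_cast; ring
  · rintro ⟨k, s⟩ hp
    have : k + (i + 1) ≤ 0 := by
      by_contra hcon
      push Not at hcon
      refine hp ⟨((k + (i + 1)).toNat, s), ?_⟩
      simp only [e, Prod.mk.injEq, and_true]
      omega
    simp [hF _ this]

lemma Pn_nonneg {P : S m → S m → ℝ} (h0 : ∀ x y, 0 ≤ P x y) (n : ℕ) :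
    ∀ x y, 0 ≤ Pn P n x y := by
  induction n with
  | zero => intro x y; simp only [Pn]; split_ifs <;> simp
  | succ n ih => intro x y; exact tsum_nonneg fun z => mul_nonneg (h0 x z) (ih z y)

lemma Pn_succ_pos {P : S m → S m → ℝ} (h0 : ∀ x y, 0 ≤ P x y) {n : ℕ} {x y : S m}
    (h : 0 < Pn P (n + 1) x y) : ∃ z, 0 < P x z ∧ 0 < Pn P n z y := by
  have h : 0 < ∑' z : S m, P x z * Pn P n z y := h
  have : ∃ z, P x z * Pn P n z y ≠ 0 := by
    by_contra hcon
    push Not at hcon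
    simp [hcon] at h
  obtain ⟨z, hz⟩ := this
  exact ⟨z, lt_of_le_of_ne (h0 x z) (Ne.symm (left_ne_zero_of_mul hz)),
    lt_of_le_of_ne (Pn_nonneg h0 n z y) (Ne.symm (right_ne_zero_of_mul hz))⟩

lemma pd_pos {P : S m → S m → ℝ} (h0 : ∀ x y, 0 ≤ P x y) (hirr : ChainIrreducible P)
    {pd : S m → ℝ} (hpd : IsStationary P pd) (y : S m) : 0 < pd y := by
  obtain ⟨hp0, hp1, hst⟩ := hpd
  have hx : ∃ x, pd x ≠ 0 := by
    by_contra hcon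
    push Not at hcon
    have : pd = fun _ => 0 := funext hcon
    rw [this] at hp1
    exact one_ne_zero (hp1.unique hasSum_zero)
  obtain ⟨x, hx⟩ := hx
  have hx : 0 < pd x := lt_of_le_of_ne (hp0 x) (Ne.symm hx)
  have key : ∀ n x, 0 < pd x → 0 < Pn P n x y → 0 < pd y := by
    intro n
    induction n with
    | zero =>
      intro x hx h
      simp only [Pn] at h
      split_ifs at h with hxy
      · rwa [← hxy]
      · exact absurd h (lt_irrefl _)
    | succ n ih =>
      intro x hx h
      obtain ⟨z, hz1, hz2⟩ := Pn_succ_pos h0 h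
      refine ih z (lt_of_lt_of_le (mul_pos hx hz1) ?_) hz2
      exact le_hasSum (hst z) x (fun w _ => mul_nonneg (hp0 w) (h0 w z))
  obtain ⟨n, -, hn⟩ := hirr x y
  exact key n x hx hn

lemma crossing {P : S m → S m → ℝ} (h0 : ∀ x y, 0 ≤ P x y) (hirr : ChainIrreducible P)
    (f : S m → ℝ) {x y : S m} (hx : f x = 0) (hy : 0 < f y) :
    ∃ x' y', f x' = 0 ∧ f y' ≠ 0 ∧ 0 < P x' y' := by
  have key : ∀ n x, f x = 0 → 0 < Pn P n x y → ∃ x' y', f x' = 0 ∧ f y' ≠ 0 ∧ 0 < P x' y' := by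
    intro n
    induction n with
    | zero =>
      intro x hx h
      simp only [Pn] at h
      split_ifs at h with hxy
      · rw [hxy] at hx; exact absurd hx hy.ne'
      · exact absurd h (lt_irrefl _)
    | succ n ih =>
      intro x hx h
      obtain ⟨z, hz1, hz2⟩ := Pn_succ_pos h0 h
      by_cases hz : f z = 0
      · exact ih z hz hz2
      · exact ⟨x, z, hx, hz, hz1⟩
  obtain ⟨n, -, hn⟩ := hirr x y
  exact key n x hx hn

lemma summable_P_bdd {P : S m → S m → ℝ} (hP : Stochastic P) {g : S m → ℝ} (hg0 : ∀ x, 0 ≤ g x)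
    {N : ℝ} (hgN : ∀ x, g x ≤ N) (x : S m) : Summable fun y => P x y * g y :=
  Summable.of_nonneg_of_le (fun y => mul_nonneg (hP.1 x y) (hg0 y))
    (fun y => mul_le_mul_of_nonneg_left (hgN y) (hP.1 x y)) ((hP.2 x).summable.mul_right N)

lemma balance_summable {α : Type} {Q : α → α → ℝ} (hP0 : ∀ x y, 0 ≤ Q x y)
    (hP1 : ∀ x, HasSum (Q x) 1) {pd : α → ℝ} (hp0 : ∀ x, 0 ≤ pd x) (hp1 : HasSum pd 1) :
    Summable fun q : α × α => pd q.1 * Q q.1 q.2 := by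
  have hnn : (0 : α × α → ℝ) ≤ fun q : α × α => pd q.1 * Q q.1 q.2 :=
    fun q => mul_nonneg (hp0 q.1) (hP0 q.1 q.2)
  have ha : ∀ x, Summable fun y => pd x * Q x y := fun x => (hP1 x).summable.mul_left (pd x)
  have hb : Summable fun x => ∑' y, pd x * Q x y := by
    have e : (fun x => ∑' y, pd x * Q x y) = pd := by
      funext x
      rw [tsum_mul_left, (hP1 x).tsum_eq, mul_one]
    rw [e]
    exact hp1.summable
  exact (summable_prod_of_nonneg hnn).mpr ⟨ha, hb⟩

lemma balance_gen {α : Type} {Q : α → α → ℝ} (hP0 : ∀ x y, 0 ≤ Q x y)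
    (hP1 : ∀ x, HasSum (Q x) 1) {pd : α → ℝ} (hp0 : ∀ x, 0 ≤ pd x) (hp1 : HasSum pd 1)
    (hst : ∀ y, HasSum (fun x => pd x * Q x y) (pd y))
    {g : α → ℝ} (hg0 : ∀ x, 0 ≤ g x) {N : ℝ} (hgN : ∀ x, g x ≤ N) :
    HasSum (fun x => pd x * (∑' y, Q x y * g y - g x)) 0 := by
  have hs1 := balance_summable hP0 hP1 hp0 hp1
  have hs2 : Summable fun q : α × α => pd q.1 * (Q q.1 q.2 * g q.2) := by
    refine Summable.of_nonneg_of_le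
      (fun q => mul_nonneg (hp0 q.1) (mul_nonneg (hP0 q.1 q.2) (hg0 q.2))) (fun q => ?_)
      (hs1.mul_right N)
    rw [← mul_assoc]
    exact mul_le_mul_of_nonneg_left (hgN q.2) (mul_nonneg (hp0 q.1) (hP0 q.1 q.2))
  have hsg : Summable fun x => pd x * g x :=
    Summable.of_nonneg_of_le (fun y => mul_nonneg (hp0 y) (hg0 y))
      (fun y => mul_le_mul_of_nonneg_left (hgN y) (hp0 y)) (hp1.summable.mul_right N)
  have e3 : (fun x => ∑' y, pd x * (Q x y * g y)) = fun x => pd x * ∑' y, Q x y * g y := by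
    funext x
    exact tsum_mul_left
  have h3 : Summable fun x => pd x * ∑' y, Q x y * g y := by
    rw [← e3]
    exact hs2.prod
  have h4 : ∑' x, pd x * ∑' y, Q x y * g y = ∑' y, pd y * g y := by
    have c1 : ∑' x, pd x * ∑' y, Q x y * g y = ∑' x, ∑' y, pd x * (Q x y * g y) := by rw [e3]
    have c2 : ∑' y, ∑' x, pd x * (Q x y * g y) = ∑' x, ∑' y, pd x * (Q x y * g y) :=
      Summable.tsum_comm (f := fun x y => pd x * (Q x y * g y)) hs2
    have c3 : ∀ y, ∑' x, pd x * (Q x y * g y) = pd y * g y := by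
      intro y
      have := ((hst y).mul_right (g y)).tsum_eq
      rw [← this]
      exact tsum_congr fun x => by ring
    rw [c1, ← c2]
    exact tsum_congr c3
  have h5 := h3.hasSum.sub hsg.hasSum
  rw [h4, sub_self] at h5
  refine h5.congr_fun fun x => ?_
  ring

lemma balance {P : S m → S m → ℝ} (hP : Stochastic P) {pd : S m → ℝ} (hpd : IsStationary P pd)
    {g : S m → ℝ} (hg0 : ∀ x, 0 ≤ g x) {N : ℝ} (hgN : ∀ x, g x ≤ N) :
    HasSum (fun x => pd x * (∑' y, P x y * g y - g x)) 0 :=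
  balance_gen hP.1 hP.2 hpd.1 hpd.2.1 hpd.2.2 hg0 hgN

lemma drift_contra (hm : 0 < m) (hA0 : ∀ k r s, 0 ≤ A k r s)
    (hP : Stochastic (P A B)) (hirr : ChainIrreducible (P A B))
    (hphase : PhaseStochastic A)
    (pd : S m → ℝ) (hpd : IsStationary (P A B) pd)
    (hsum : ∀ r s, Summable fun k : ℤ => A k r s * |(k : ℝ)|) {g : ℝ} (hg : 0 ≤ g)
    (h : Fin m → ℝ) (hh0 : ∀ r, h r ≤ 0)
    (hh : ∀ r, (∑ s, ∑' k : ℤ, A k r s * (k : ℝ)) + ((matA A).mulVec h) r - h r = g) : False := by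
  let j0 : Fin m := ⟨0, hm⟩
  let H : ℝ := ∑ r, |h r|
  have hH : ∀ r, |h r| ≤ H := fun r =>
    Finset.single_le_sum (f := fun r => |h r|) (fun r _ => abs_nonneg _) (Finset.mem_univ r)
  have hHn : ∀ r, -H ≤ h r := fun r => by linarith [neg_abs_le (h r), hH r]
  have hH0 : 0 ≤ H := (abs_nonneg _).trans (hH j0)
  let f : S m → ℝ := fun x => max ((x.1 : ℝ) + h x.2) 0
  have hf0 : ∀ x, 0 ≤ f x := fun x => le_max_right _ _
  let Mt : ℝ := ∑ j, ∑ s, ∑' k : ℤ, A k j s * (|(k : ℝ)| + H)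
  have hsH : ∀ j s, Summable fun k : ℤ => A k j s * (|(k : ℝ)| + H) := fun j s =>
    ((hsum j s).add ((summable_A hphase j s).mul_right H)).congr fun k => by ring
  have hMj : ∀ j, ∑ s, ∑' k : ℤ, A k j s * (|(k : ℝ)| + H) ≤ Mt := fun j =>
    Finset.single_le_sum (f := fun j => ∑ s, ∑' k : ℤ, A k j s * (|(k : ℝ)| + H))
      (fun j _ => Finset.sum_nonneg fun s _ => tsum_nonneg fun k =>
        mul_nonneg (hA0 _ _ _) (by positivity)) (Finset.mem_univ j)
  -- facts for states with `f x > 0`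
  have hC : ∀ x, 0 < f x → (Summable fun y => P A B x y * f y) ∧
      f x ≤ ∑' y, P A B x y * f y ∧ (Summable fun y => P A B x y * max (f y - f x) 0) ∧
      ∑' y, P A B x y * max (f y - f x) 0 ≤ Mt := by
    rintro ⟨i, j⟩ hx
    have hfx : f (i, j) = (i : ℝ) + h j := by
      rcases lt_max_iff.mp hx with h1 | h1
      · exact max_eq_left h1.le
      · exact absurd h1 (lt_irrefl _)
    have hi : i ≠ 0 := by
      rintro rfl
      rw [hfx] at hx
      have := hh0 j
      simp at hx
      linarith
    obtain ⟨i, rfl⟩ := Nat.exists_eq_succ_of_ne_zero hi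
    rw [Nat.succ_eq_add_one] at *
    set c := f (i + 1, j) with hc
    push_cast at hfx
    -- first sum
    let F1 : ℤ → Fin m → ℝ := fun l s => max ((l : ℝ) + h s) 0
    have hF1 : ∀ l ≤ 0, ∀ s, F1 l s = 0 := fun l hl s => by
      have : (l : ℝ) ≤ 0 := by exact_mod_cast hl
      exact max_eq_right (by linarith [hh0 s])
    have hi0 : (0 : ℝ) ≤ (i : ℝ) + 1 := by positivity
    have hs1 : ∀ s, Summable fun k : ℤ => A k j s * F1 (k + (i + 1)) s := by
      intro s
      refine Summable.of_nonneg_of_le (fun k => mul_nonneg (hA0 _ _ _) (le_max_right _ _))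
        (fun k => mul_le_mul_of_nonneg_left ?_ (hA0 _ _ _))
        (((hsum j s).add ((summable_A hphase j s).mul_right ((i : ℝ) + 1))).congr
          fun k => (mul_add (A k j s) |(k : ℝ)| ((i : ℝ) + 1)).symm)
      simp only [F1]
      push_cast
      refine max_le ?_ (by positivity)
      linarith [hh0 s, le_abs_self (k : ℝ)]
    have hS1 := hasSum_P (B := B) i j F1 hF1
      (hasSum_prod_fin (fun k s => A k j s * F1 (k + (i + 1)) s) hs1)
    have hS1' : HasSum (fun y => P A B (i + 1, j) y * f y)
        (∑ s, ∑' k : ℤ, A k j s * F1 (k + (i + 1)) s) :=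
      hS1.congr_fun fun y => by simp [F1, f]
    -- second sum
    let F2 : ℤ → Fin m → ℝ := fun l s => max (max ((l : ℝ) + h s) 0 - c) 0
    have hF2 : ∀ l ≤ 0, ∀ s, F2 l s = 0 := fun l hl s => by
      have h1 : max ((l : ℝ) + h s) 0 = 0 := hF1 l hl s
      simp only [F2]
      rw [h1]
      exact max_eq_right (by linarith)
    have hF2le : ∀ (k : ℤ) s, F2 (k + (i + 1)) s ≤ |(k : ℝ)| + H := by
      intro k s
      simp only [F2]
      push_cast
      have := abs_nonneg (k : ℝ)
      refine max_le ?_ (by positivity)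
      rw [sub_le_iff_le_add]
      refine max_le ?_ (by positivity)
      rw [hfx]
      linarith [hh0 s, hHn j, le_abs_self (k : ℝ)]
    have hs2 : ∀ s, Summable fun k : ℤ => A k j s * F2 (k + (i + 1)) s := fun s =>
      Summable.of_nonneg_of_le (fun k => mul_nonneg (hA0 _ _ _) (le_max_right _ _))
        (fun k => mul_le_mul_of_nonneg_left (hF2le k s) (hA0 _ _ _)) (hsH j s)
    have hS2 := hasSum_P (B := B) i j F2 hF2
      (hasSum_prod_fin (fun k s => A k j s * F2 (k + (i + 1)) s) hs2)
    have hS2' : HasSum (fun y => P A B (i + 1, j) y * max (f y - c) 0)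
        (∑ s, ∑' k : ℤ, A k j s * F2 (k + (i + 1)) s) :=
      hS2.congr_fun fun y => by simp [F2, f]
    refine ⟨hS1'.summable, ?_, hS2'.summable, ?_⟩
    · rw [hS1'.tsum_eq]
      have hsk : ∀ s, Summable fun k : ℤ => A k j s * (k : ℝ) := fun s =>
        Summable.of_norm_bounded (hsum j s) fun k => by
          rw [norm_mul, Real.norm_of_nonneg (hA0 _ _ _), Real.norm_eq_abs]
      have hlow : ∀ s, (∑' k : ℤ, A k j s * (k : ℝ)) + matA A j s * ((i : ℝ) + 1 + h s)
          ≤ ∑' k : ℤ, A k j s * F1 (k + (i + 1)) s := by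
        intro s
        change _ + (∑' k : ℤ, A k j s) * _ ≤ _
        rw [← tsum_mul_right, ← (hsk s).tsum_add ((summable_A hphase j s).mul_right _)]
        refine ((hsk s).add ((summable_A hphase j s).mul_right _)).tsum_le_tsum (fun k => ?_) (hs1 s)
        rw [← mul_add]
        refine mul_le_mul_of_nonneg_left ?_ (hA0 _ _ _)
        simp only [F1]
        push_cast
        refine le_trans (le_of_eq ?_) (le_max_left _ _)
        ring
      have hlow2 := Finset.sum_le_sum fun s (_ : s ∈ Finset.univ) => hlow s
      have e : ∑ s, ((∑' k : ℤ, A k j s * (k : ℝ)) + matA A j s * ((i : ℝ) + 1 + h s))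
          = (∑ s, ∑' k : ℤ, A k j s * (k : ℝ)) + ((matA A).mulVec h) j + ((i : ℝ) + 1) := by
        have e1 : ∑ s, matA A j s * ((i : ℝ) + 1) = (i : ℝ) + 1 := by
          rw [← Finset.sum_mul, matA_row hphase, one_mul]
        simp only [mul_add (matA A j _) _ (h _), Finset.sum_add_distrib, e1, Matrix.mulVec,
          dotProduct]
        ring
      rw [e] at hlow2
      linarith [hh j]
    · rw [hS2'.tsum_eq]
      refine le_trans (Finset.sum_le_sum fun s _ => ?_) (hMj j)
      exact (hs2 s).tsum_le_tsum
        (fun k => mul_le_mul_of_nonneg_left (hF2le k s) (hA0 _ _ _)) (hsH j s)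
  -- truncations
  let fN : ℕ → S m → ℝ := fun N x => min (f x) ((N : ℝ) + 1)
  have hN0 : ∀ N : ℕ, (0 : ℝ) ≤ (N : ℝ) + 1 := fun N => by positivity
  have hfN0 : ∀ N x, 0 ≤ fN N x := fun N x => le_min (hf0 x) (hN0 N)
  have hfNf : ∀ N x, fN N x ≤ f x := fun N x => min_le_left _ _
  have hfNN : ∀ N x, fN N x ≤ (N : ℝ) + 1 := fun N x => min_le_right _ _
  have hfNlim : ∀ x, Tendsto (fun N => fN N x) atTop (𝓝 (f x)) := by
    intro x
    refine tendsto_const_nhds.congr' ?_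
    filter_upwards [eventually_ge_atTop (Nat.ceil (f x))] with N hN
    have h1 : f x ≤ (N : ℝ) := (Nat.le_ceil _).trans (by exact_mod_cast hN)
    exact (min_eq_left (by linarith)).symm
  let G : ℕ → S m → ℝ := fun N x => ∑' y, P A B x y * fN N y - fN N x
  have hsN : ∀ N x, Summable fun y => P A B x y * fN N y := fun N x =>
    summable_P_bdd hP (hfN0 N) (hfNN N) x
  have hbal : ∀ N, HasSum (fun x => pd x * G N x) 0 := fun N => balance hP hpd (hfN0 N) (hfNN N)
  have hp0 := hpd.1
  -- crossing
  obtain ⟨x', y', hx', hy', hxy⟩ : ∃ x' y', f x' = 0 ∧ f y' ≠ 0 ∧ 0 < P A B x' y' := by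
    obtain ⟨n, hn⟩ := exists_nat_gt H
    refine crossing hP.1 hirr f (x := (0, j0)) (y := (n, j0)) ?_ ?_
    · exact max_eq_right (by simpa using hh0 j0)
    · refine lt_max_of_lt_left ?_
      have := hHn j0
      simp only
      linarith
  have hy' : 0 < f y' := lt_of_le_of_ne (hf0 _) (Ne.symm hy')
  let δ : ℝ := pd x' * (P A B x' y' * min (f y') 1)
  have hδ : 0 < δ := mul_pos (pd_pos hP.1 hirr hpd x') (mul_pos hxy (lt_min hy' one_pos))
  have hGzero : ∀ N x, f x = 0 → 0 ≤ G N x := by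
    intro N x hx
    have h1 : fN N x = 0 := le_antisymm (hx ▸ hfNf N x) (hfN0 N x)
    simp only [G, h1, sub_zero]
    exact tsum_nonneg fun y => mul_nonneg (hP.1 _ _) (hfN0 N y)
  have hGx' : ∀ N, P A B x' y' * min (f y') 1 ≤ G N x' := by
    intro N
    have h1 : fN N x' = 0 := le_antisymm (hx' ▸ hfNf N x') (hfN0 N x')
    simp only [G, h1, sub_zero]
    refine le_trans ?_ ((hsN N x').le_tsum y' (fun y _ => mul_nonneg (hP.1 _ _) (hfN0 N y)))
    refine mul_le_mul_of_nonneg_left (min_le_min le_rfl ?_) (hP.1 _ _)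
    have : (0 : ℝ) ≤ N := Nat.cast_nonneg N
    linarith
  let U : ℕ → S m → ℝ := fun N x => if 0 < f x then pd x * G N x else 0
  -- bound
  have hGb : ∀ N x, 0 < f x → |G N x| ≤ 2 * Mt := by
    intro N x hx
    obtain ⟨c1, c2, c3, c4⟩ := hC x hx
    have hPs := (hP.2 x).summable
    have e1 : G N x = ∑' y, P A B x y * (fN N y - fN N x) := by
      simp only [mul_sub]
      rw [(hsN N x).tsum_sub (hPs.mul_right _), tsum_mul_right, (hP.2 x).tsum_eq, one_mul]
    have habs : ∀ y, |f y - f x| = 2 * max (f y - f x) 0 - (f y - f x) := by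
      intro y
      rcases le_total 0 (f y - f x) with h | h
      · rw [max_eq_left h, abs_of_nonneg h]; ring
      · rw [max_eq_right h, abs_of_nonpos h]; ring
    have hs3 : HasSum (fun y => P A B x y * |f y - f x|)
        (2 * (∑' y, P A B x y * max (f y - f x) 0) - (∑' y, P A B x y * f y - 1 * f x)) := by
      refine ((c3.hasSum.mul_left 2).sub (c1.hasSum.sub ((hP.2 x).mul_right (f x)))).congr_fun ?_
      intro y
      rw [habs]; ring
    have hle : ∀ y, ‖P A B x y * (fN N y - fN N x)‖ ≤ P A B x y * |f y - f x| := by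
      intro y
      rw [norm_mul, Real.norm_of_nonneg (hP.1 _ _), Real.norm_eq_abs]
      refine mul_le_mul_of_nonneg_left ?_ (hP.1 _ _)
      exact (abs_min_sub_min_le_max _ _ _ _).trans (by simp)
    have := tsum_of_norm_bounded hs3 hle
    rw [e1, ← Real.norm_eq_abs]
    linarith
  have hUle : ∀ N, ∑' x, U N x ≤ -δ := by
    intro N
    have hs := (hbal N).summable
    have hU : Summable (U N) := by
      refine Summable.of_norm_bounded hs.norm fun x => ?_
      simp only [U]
      split_ifs
      · exact le_rfl
      · rw [norm_zero]; exact norm_nonneg _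
    have h1 : ∑' x, (pd x * G N x - U N x) = 0 - ∑' x, U N x := by
      rw [hs.tsum_sub hU, (hbal N).tsum_eq]
    have hnn : ∀ x, 0 ≤ pd x * G N x - U N x := by
      intro x
      simp only [U]
      split_ifs with hx
      · simp
      · have : f x = 0 := le_antisymm (not_lt.mp hx) (hf0 x)
        simpa using mul_nonneg (hp0 x) (hGzero N x this)
    have h2 := (hs.sub hU).le_tsum x' (fun x _ => hnn x)
    have h3 : U N x' = 0 := by simp [U, hx']
    have h4 : δ ≤ pd x' * G N x' := mul_le_mul_of_nonneg_left (hGx' N) (hp0 x')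
    simp only [h3, sub_zero] at h2
    linarith
  let G0 : S m → ℝ := fun x => ∑' y, P A B x y * f y - f x
  have hlim : Tendsto (fun N => ∑' x, U N x) atTop
      (𝓝 (∑' x, if 0 < f x then pd x * G0 x else 0)) := by
    have hMt : 0 ≤ Mt := (Finset.sum_nonneg fun s _ => tsum_nonneg fun k =>
        mul_nonneg (hA0 _ _ _) (by positivity)).trans (hMj j0)
    refine tendsto_tsum_of_dominated_convergence (bound := fun x => pd x * (2 * Mt))
      (hpd.2.1.summable.mul_right _) (fun x => ?_) (Eventually.of_forall fun N x => ?_)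
    · simp only [U]
      split_ifs with hx
      · refine Tendsto.const_mul _ (Tendsto.sub ?_ (hfNlim x))
        refine tendsto_tsum_of_dominated_convergence (hC x hx).1
          (fun y => (hfNlim y).const_mul _) (Eventually.of_forall fun N y => ?_)
        rw [Real.norm_of_nonneg (mul_nonneg (hP.1 _ _) (hfN0 N y))]
        exact mul_le_mul_of_nonneg_left (hfNf N y) (hP.1 _ _)
      · exact tendsto_const_nhds
    · simp only [U]
      split_ifs with hx
      · rw [norm_mul, Real.norm_of_nonneg (hp0 x), Real.norm_eq_abs]
        exact mul_le_mul_of_nonneg_left (hGb N x hx) (hp0 x)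
      · rw [norm_zero]
        exact mul_nonneg (hp0 x) (by linarith)
  have h1 := le_of_tendsto' hlim hUle
  have h2 : 0 ≤ ∑' x, if 0 < f x then pd x * G0 x else 0 := by
    refine tsum_nonneg fun x => ?_
    split_ifs with hx
    · exact mul_nonneg (hp0 x) (sub_nonneg.mpr (hC x hx).2.1)
    · exact le_rfl
  linarith

end recurrence

/-- For an irreducible, aperiodic, positive recurrent `GI/G/1`-type Markov
chain with stochastic phase matrix `A` and `φ_{A+} > 1`: for every real `z` with
`1 < z < min(φ_{A+}, η)` we have `χ(z) < 1`, and there is a Perron–Frobenius right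
eigenvector `Y(z) ≥ e` with `A*(z) Y(z) = χ(z) Y(z)`. -/
theorem chi_lt_one_and_eigenvector {m : ℕ} (hm : 0 < m)
    (A B : ℤ → Matrix (Fin m) (Fin m) ℝ)
    (hA0 : ∀ k r s, 0 ≤ A k r s) (hB0 : ∀ k r s, 0 ≤ B k r s)
    (hP : Stochastic (P A B))
    (hirr : ChainIrreducible (P A B)) (hap : ChainAperiodic (P A B))
    (hphase : PhaseStochastic A) (hphaseirr : MatIrreducible (matA A))
    (pd : S m → ℝ) (hpd : IsStationary (P A B) pd)
    (hphi : 1 < phiA A) :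
    ∀ z : ℝ, 1 < z → ENNReal.ofReal z < min (phiA A) (eta A) →
      chi (AstarR A z) < 1 ∧
        ∃ Y : Fin m → ℝ, (∀ r, 1 ≤ Y r) ∧
          (AstarR A z).mulVec Y = chi (AstarR A z) • Y := by
  intro z hz1 hz
  have hzp : ENNReal.ofReal z < phiA A := lt_of_lt_of_le hz (min_le_left _ _)
  have h0 := AstarR_nonneg hA0 (z := z) (by linarith)
  have hirrz := AstarR_irr hA0 hphase hphaseirr hz1.le hzp
  have hstart : ∃ w ∈ Set.Ioo 1 z, ∃ V : Fin m → ℝ, (∀ r, 0 < V r) ∧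
      ∀ r, ((AstarR A w).mulVec V) r < V r := by
    by_cases hs : ∀ r s, Summable fun k : ℤ => A k r s * |(k : ℝ)|
    · obtain ⟨g, h, hg⟩ := poisson hm (matA_nonneg hA0) (matA_row hphase) hphaseirr
        (fun r => ∑ s, ∑' k : ℤ, A k r s * (k : ℝ))
      rcases lt_or_ge g 0 with hg0 | hg0
      · refine near_one hA0 hphase hz1 hzp id (fun k => ?_) (fun k => le_rfl) hs h (fun r => ?_)
        · rcases le_total 0 k with hk | hk
          · exact Or.inl ⟨hk, rfl⟩
          · exact Or.inr hk
        · have := hg r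
          simp only [id] at this ⊢
          linarith
      · exfalso
        have : Nonempty (Fin m) := ⟨⟨0, hm⟩⟩
        obtain ⟨i, hi⟩ := Finite.exists_max h
        refine drift_contra hm hA0 hP hirr hphase pd hpd hs hg0 (h - fun _ => h i)
          (fun r => by simpa using hi r) (fun r => ?_)
        rw [Matrix.mulVec_sub, Pi.sub_apply, Pi.sub_apply,
          mulVec_const (matA_row hphase) (h := fun _ => h i) (fun _ => rfl), ← hg r]
        ring
    · push Not at hs
      obtain ⟨r0, s0, hs⟩ := hs
      exact start_infinite hm hA0 hphase hphaseirr hz1 hzp r0 s0 hs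
  obtain ⟨w, hw, hV⟩ := hstart
  obtain ⟨V, hV, hlt⟩ := propagate hm hA0 hphase hphaseirr hw hz hV
  exact ⟨chi_lt_one hm h0 hirrz hV hlt, eigvec_ge_one hm h0 hirrz⟩

end GIG1
end

section
/- Let z > 1 be a real number, let the A_k (k ∈ ℤ) be nonnegative m×m matrices such that A*(z) = Σ_{k∈ℤ} z^k A_k is finite entrywise, let Y be a column vector with all entries ≥ 1 and maximum entry α, let 0 < δ < 1, and suppose A*(z) Y = (1−δ) Y. Let {B_{−i}}_{i≥1} be nonnegative m×m matrices with B_{−i} e ≤ e for all i. If N is a positive integer with α z^{−N} ≤ δ/2, then for every i > N the entrywise inequality z^{−i} B_{−i} Y + Σ_{k=−i+1}^{∞} z^k A_k Y ≤ (1 − δ/2) Y holds. -/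
open Filter Topology
open scoped ENNReal NNReal BigOperators

namespace GIG1

/-- Let `z > 1`, let `A*(z) = ∑_{k∈ℤ} z^k A_k` be finite entrywise, let `Y ≥ e`
have maximum entry `α`, let `0 < δ < 1` with `A*(z) Y = (1-δ) Y`, and let `{B_{-i}}_{i≥1}` be
nonnegative with row sums at most 1.  If `N ≥ 1` satisfies `α z^{-N} ≤ δ/2`, then for all
`i > N`, entrywise `z^{-i} B_{-i} Y + ∑_{k=-i+1}^∞ z^k A_k Y ≤ (1 - δ/2) Y`. -/
theorem drift_inequality {m : ℕ} (hm : 0 < m)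
    (z : ℝ) (hz : 1 < z)
    (A : ℤ → Matrix (Fin m) (Fin m) ℝ) (hA0 : ∀ k r s, 0 ≤ A k r s)
    (hAsum : ∀ r s, Summable fun k : ℤ => A k r s * z ^ k)
    (Y : Fin m → ℝ) (hY1 : ∀ r, 1 ≤ Y r)
    (α : ℝ) (hα : IsGreatest (Set.range Y) α)
    (δ : ℝ) (hδ0 : 0 < δ) (hδ1 : δ < 1)
    (heig : (AstarR A z).mulVec Y = (1 - δ) • Y)
    (B : ℕ → Matrix (Fin m) (Fin m) ℝ) (hB0 : ∀ i r s, 0 ≤ B i r s)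
    (hBrow : ∀ i, 1 ≤ i → ∀ r, ∑ s, B i r s ≤ 1)
    (N : ℕ) (hN : 0 < N) (hNα : α * z ^ (-(N : ℤ)) ≤ δ / 2) :
    ∀ i : ℕ, N < i → ∀ r : Fin m,
      z ^ (-(i : ℤ)) * (B i).mulVec Y r
          + (∑' k : {k : ℤ // -(i : ℤ) + 1 ≤ k}, z ^ (k : ℤ) * ((A k).mulVec Y r))
        ≤ (1 - δ / 2) * Y r := by
  intro i hi r
  have hz0 : 0 < z := by linarith
  have hHS : HasSum (fun k : ℤ => z ^ k * ((A k).mulVec Y r)) ((1 - δ) * Y r) := by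
    have h1 : HasSum (fun k : ℤ => ∑ s, (A k r s * z ^ k) * Y s)
        (∑ s, (∑' k : ℤ, A k r s * z ^ k) * Y s) :=
      hasSum_sum fun s _ => (hAsum r s).hasSum.mul_right (Y s)
    have h2 : ∑ s, (∑' k : ℤ, A k r s * z ^ k) * Y s = (1 - δ) * Y r := by
      have := congrFun heig r
      simpa [AstarR, Matrix.mulVec, dotProduct] using this
    rw [h2] at h1
    convert h1 using 2 with k
    simp only [Matrix.mulVec, dotProduct, Finset.mul_sum]
    exact Finset.sum_congr rfl fun s _ => by ring
  have hnn : ∀ k : ℤ, 0 ≤ z ^ k * ((A k).mulVec Y r) := fun k =>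
    mul_nonneg (zpow_pos hz0 k).le
      (show 0 ≤ ∑ s, A k r s * Y s from
        Finset.sum_nonneg fun s _ => mul_nonneg (hA0 k r s) (by linarith [hY1 s]))
  have hT : (∑' k : {k : ℤ // -(i : ℤ) + 1 ≤ k}, z ^ (k : ℤ) * ((A k).mulVec Y r))
      ≤ (1 - δ) * Y r := by
    rw [← hHS.tsum_eq]
    exact hHS.summable.tsum_subtype_le _ {k : ℤ | -(i : ℤ) + 1 ≤ k} hnn
  have hα1 : 1 ≤ α := (hY1 r).trans (hα.2 ⟨r, rfl⟩)
  have hB : (B i).mulVec Y r ≤ α := by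
    calc (B i).mulVec Y r = ∑ s, B i r s * Y s := rfl
      _ ≤ ∑ s, B i r s * α :=
        Finset.sum_le_sum fun s _ => mul_le_mul_of_nonneg_left (hα.2 ⟨s, rfl⟩) (hB0 i r s)
      _ = (∑ s, B i r s) * α := (Finset.sum_mul _ _ _).symm
      _ ≤ 1 * α := mul_le_mul_of_nonneg_right (hBrow i (by omega) r) (by linarith)
      _ = α := one_mul α
  have hzi : z ^ (-(i : ℤ)) ≤ z ^ (-(N : ℤ)) := zpow_le_zpow_right₀ hz.le (by omega)
  have h3 : z ^ (-(i : ℤ)) * (B i).mulVec Y r ≤ δ / 2 := by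
    calc z ^ (-(i : ℤ)) * (B i).mulVec Y r ≤ z ^ (-(i : ℤ)) * α :=
          mul_le_mul_of_nonneg_left hB (zpow_pos hz0 _).le
      _ ≤ z ^ (-(N : ℤ)) * α := mul_le_mul_of_nonneg_right hzi (by linarith)
      _ ≤ δ / 2 := by linarith
  nlinarith [hY1 r]

end GIG1
end
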